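/- Let (x,v) : ℝ → ℝ³ × ℝ³ be a global C¹ solution of the repulsive Kepler ODE with x(t) ≠ 0 for all t, and let H be its conserved energy. Then the asymptotic velocities v₊∞ := lim_{t→+∞} v(t) and v₋∞ := lim_{t→−∞} v(t) exist, satisfy |v₊∞|² = |v₋∞|² = H > 0, and moreover x(t)/t → v₊∞ as t → +∞ and x(t)/t → v₋∞ as t → −∞. -/

import Mathlib

/-!
The energy is positive because `q / ‖x‖ > 0`. Along a solution
`d/dt ⟪x, v⟫ = ‖v‖² + q / (2‖x‖) = H - q / (2‖x‖) ≥ H / 2`, and `d/dt ‖x‖² = 2 ⟪x, v⟫`, so `‖x‖²`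
grows at least quadratically (`kepler_quadratic_lower_bound`). Hence the acceleration, of norm
`q / (2‖x‖²)`, is `O(t⁻²)` and integrable at `+∞`, so `v` has a limit `v₊`. Since `‖x‖ → ∞`,
conservation of energy gives `‖v₊‖² = H`. Finally `x(t) - t v₊` has derivative `v(t) - v₊ → 0`,
so it is `o(t)` by the mean value inequality, i.e. `x(t) / t → v₊` (`kepler_forward`).
The limit `t → -∞` follows by applying this to the time-reversed trajectory `(x(-t), -v(-t))`.
-/

open scoped RealInnerProductSpace

noncomputable section

/-- Euclidean three-space. -/
abbrev R3 : Type := EuclideanSpace ℝ (Fin 3)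

/-- The energy `H(x,v) = |v|² + q/|x|` of the repulsive Kepler problem. -/
def keplerH (q : ℝ) (x v : R3) : ℝ := ‖v‖ ^ 2 + q / ‖x‖

section

open Filter Topology Set MeasureTheory

/-- If the derivative of `f` tends to `0` at `+∞`, then `f(t) = o(t)`. -/
lemma tendsto_inv_smul_of_deriv_tendsto_zero {f f' : ℝ → R3}
    (hf : ∀ t, HasDerivAt f (f' t) t) (h0 : Tendsto f' atTop (𝓝 0)) :
    Tendsto (fun t : ℝ => t⁻¹ • f t) atTop (𝓝 0) := by
  rw [NormedAddGroup.tendsto_nhds_zero] at h0 ⊢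
  intro ε hε
  obtain ⟨T, hT⟩ := eventually_atTop.1 (h0 (ε / 2) (half_pos hε))
  filter_upwards [eventually_ge_atTop T, eventually_gt_atTop 0,
    eventually_gt_atTop (2 / ε * (‖f T‖ + ε / 2 * |T|))] with t htT ht htB
  have hmv : ‖f t - f T‖ ≤ ε / 2 * ‖t - T‖ :=
    (convex_Ici T).norm_image_sub_le_of_norm_hasDerivWithin_le
      (fun s _ => (hf s).hasDerivWithinAt) (fun s hs => (hT s hs).le)
      (mem_Ici.2 le_rfl) (mem_Ici.2 htT)
  have htri : ‖f t‖ ≤ ‖f t - f T‖ + ‖f T‖ := by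
    simpa using norm_add_le (f t - f T) (f T)
  have hB : ‖f T‖ + ε / 2 * |T| < ε / 2 * t := by
    have := mul_lt_mul_of_pos_left htB (half_pos hε)
    rwa [← mul_assoc, show ε / 2 * (2 / ε) = 1 by field_simp, one_mul] at this
  have habs : ‖t - T‖ ≤ t + |T| := by
    rw [Real.norm_of_nonneg (by linarith)]
    linarith [neg_abs_le T]
  have : ‖f t‖ < ε * t := by
    nlinarith [mul_le_mul_of_nonneg_left habs (half_pos hε).le]
  rw [norm_smul, norm_inv, Real.norm_of_nonneg ht.le, inv_mul_lt_iff₀ ht]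
  linarith

/-- Virial lower bound: `d/dt ⟪x, v⟫ = H - q / (2‖x‖) ≥ H / 2`, because `q / ‖x‖ ≤ H`.
Integrating twice gives a quadratic lower bound on `‖x‖²`. -/
lemma kepler_quadratic_lower_bound (q : ℝ) (x v : ℝ → R3) (H : ℝ)
    (hx0 : ∀ t, x t ≠ 0)
    (hx : ∀ t, HasDerivAt x (v t) t)
    (hv : ∀ t, HasDerivAt v ((q / 2 / ‖x t‖ ^ 3) • x t) t)
    (hH : ∀ t, keplerH q (x t) (v t) = H) {t : ℝ} (ht : 0 ≤ t) :
    2 * ⟪x 0, v 0⟫ * t + H / 2 * t ^ 2 ≤ ‖x t‖ ^ 2 := by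
  have hg : ∀ s, HasDerivAt (fun s => ⟪x s, v s⟫ - H / 2 * s) (‖v s‖ ^ 2 / 2) s := by
    intro s
    refine (((hx s).inner ℝ (hv s)).sub ((hasDerivAt_id s).const_mul (H / 2))).congr_deriv ?_
    have hn : ‖x s‖ ≠ 0 := norm_ne_zero_iff.2 (hx0 s)
    rw [inner_smul_right, real_inner_self_eq_norm_sq, real_inner_self_eq_norm_sq, ← hH s, keplerH]
    field_simp
    ring
  have hgm : Monotone (fun s => ⟪x s, v s⟫ - H / 2 * s) :=
    monotone_of_hasDerivAt_nonneg hg (fun s => by positivity)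
  have hh : ∀ s, HasDerivAt (fun s => ‖x s‖ ^ 2 - (2 * ⟪x 0, v 0⟫ * s + H / 2 * s ^ 2))
      (2 * ⟪x s, v s⟫ - (2 * ⟪x 0, v 0⟫ + H * s)) s := by
    intro s
    refine ((hx s).norm_sq.sub (((hasDerivAt_id s).const_mul (2 * ⟪x 0, v 0⟫)).add
      ((hasDerivAt_pow 2 s).const_mul (H / 2)))).congr_deriv ?_
    norm_num
    ring
  have hhm : MonotoneOn (fun s => ‖x s‖ ^ 2 - (2 * ⟪x 0, v 0⟫ * s + H / 2 * s ^ 2)) (Ici 0) := by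
    refine monotoneOn_of_hasDerivWithinAt_nonneg (convex_Ici 0)
      (fun s _ => (hh s).continuousAt.continuousWithinAt)
      (fun s _ => (hh s).hasDerivWithinAt) (fun s hs => ?_)
    rw [interior_Ici] at hs
    have := hgm (le_of_lt (mem_Ioi.1 hs))
    simp only [mul_zero, sub_zero] at this
    linarith
  have := hhm (mem_Ici.2 le_rfl) (mem_Ici.2 ht) ht
  simp only [mul_zero] at this
  nlinarith [sq_nonneg ‖x 0‖]

lemma kepler_energy_pos (q : ℝ) (hq : 0 < q) (x v : ℝ → R3) (H : ℝ)
    (hx0 : ∀ t, x t ≠ 0) (hH : ∀ t, keplerH q (x t) (v t) = H) : 0 < H := by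
  have hn : 0 < ‖x 0‖ := norm_pos_iff.2 (hx0 0)
  rw [← hH 0, keplerH]
  positivity

/-- The forward-in-time half of the theorem. -/
lemma kepler_forward (q : ℝ) (hq : 0 < q) (x v : ℝ → R3) (H : ℝ)
    (hx0 : ∀ t, x t ≠ 0)
    (hx : ∀ t, HasDerivAt x (v t) t)
    (hv : ∀ t, HasDerivAt v ((q / 2 / ‖x t‖ ^ 3) • x t) t)
    (hH : ∀ t, keplerH q (x t) (v t) = H) :
    ∃ vp : R3, Tendsto v atTop (𝓝 vp) ∧ ‖vp‖ ^ 2 = H ∧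
      Tendsto (fun t : ℝ => t⁻¹ • x t) atTop (𝓝 vp) := by
  have hHpos := kepler_energy_pos q hq x v H hx0 hH
  -- The quadratic term of the virial bound dominates the linear one for large times.
  obtain ⟨T, hT0, hT⟩ : ∃ T : ℝ, 0 < T ∧ ∀ t, T ≤ t → H / 4 * t ^ 2 ≤ ‖x t‖ ^ 2 := by
    refine ⟨8 / H * |⟪x 0, v 0⟫| + 1, by positivity, fun t ht => ?_⟩
    have ht0 : 0 ≤ t := le_trans (by positivity) ht
    have hb := kepler_quadratic_lower_bound q x v H hx0 hx hv hH ht0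
    have h1 : 2 * |⟪x 0, v 0⟫| ≤ H / 4 * t := by
      have h2 : H / 4 * (8 / H * |⟪x 0, v 0⟫| + 1) ≤ H / 4 * t :=
        mul_le_mul_of_nonneg_left ht (by positivity)
      have h3 : H / 4 * (8 / H * |⟪x 0, v 0⟫| + 1) = 2 * |⟪x 0, v 0⟫| + H / 4 := by
        field_simp
        ring
      linarith
    nlinarith [mul_le_mul_of_nonneg_right h1 ht0,
      mul_le_mul_of_nonneg_right (neg_abs_le ⟪x 0, v 0⟫) ht0]
  have hxc : Continuous x := continuous_iff_continuousAt.2 fun t => (hx t).continuousAt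
  have hn0 : ∀ t, ‖x t‖ ≠ 0 := fun t => norm_ne_zero_iff.2 (hx0 t)
  have hac : Continuous (fun t => (q / 2 / ‖x t‖ ^ 3) • x t) :=
    (continuous_const.div (hxc.norm.pow 3) (fun t => pow_ne_zero 3 (hn0 t))).smul hxc
  -- The acceleration has norm `q / (2‖x‖²) ≤ (2q / H) t⁻²`, hence is integrable at infinity.
  have hint : IntegrableOn (fun t => (q / 2 / ‖x t‖ ^ 3) • x t) (Ioi T) := by
    have hdom : IntegrableOn (fun t : ℝ => 2 * q / H * t ^ (-2 : ℝ)) (Ioi T) :=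
      (integrableOn_Ioi_rpow_of_lt (by norm_num) hT0).const_mul _
    refine hdom.mono' hac.aestronglyMeasurable ?_
    refine (ae_restrict_mem measurableSet_Ioi).mono fun t ht => ?_
    have ht0 : 0 < t := hT0.trans ht
    have hn : 0 < ‖x t‖ := norm_pos_iff.2 (hx0 t)
    have hnorm : ‖(q / 2 / ‖x t‖ ^ 3) • x t‖ = q / 2 / ‖x t‖ ^ 2 := by
      rw [norm_smul, Real.norm_of_nonneg (by positivity)]
      field_simp
    have hpow : t ^ (-2 : ℝ) = (t ^ 2)⁻¹ := by
      rw [Real.rpow_neg ht0.le]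
      norm_num
    rw [hnorm, hpow]
    calc q / 2 / ‖x t‖ ^ 2 ≤ q / 2 / (H / 4 * t ^ 2) :=
          div_le_div_of_nonneg_left (by positivity) (by positivity) (hT t (le_of_lt ht))
      _ = 2 * q / H * (t ^ 2)⁻¹ := by
          field_simp
          ring
  have hlim := tendsto_limUnder_of_hasDerivAt_of_integrableOn_Ioi (a := T) (fun t _ => hv t) hint
  set vp := limUnder atTop v
  refine ⟨vp, hlim, ?_, ?_⟩
  · have hsq : Tendsto (fun t => ‖x t‖ ^ 2) atTop atTop :=
      tendsto_atTop_mono' _ (eventually_atTop.2 ⟨T, hT⟩)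
        ((tendsto_pow_atTop two_ne_zero).const_mul_atTop (by positivity))
    have hnx : Tendsto (fun t => ‖x t‖) atTop atTop := by
      have := Real.tendsto_sqrt_atTop.comp hsq
      simpa [Function.comp_def] using this
    have hE : Tendsto (fun t => ‖v t‖ ^ 2 + q / ‖x t‖) atTop (𝓝 (‖vp‖ ^ 2 + 0)) :=
      (hlim.norm.pow 2).add (hnx.const_div_atTop q)
    have hE' : (fun t => ‖v t‖ ^ 2 + q / ‖x t‖) = fun _ => H := funext hH
    rw [hE', add_zero] at hE
    exact tendsto_nhds_unique hE tendsto_const_nhds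
  · have hd : ∀ t, HasDerivAt (fun t => x t - t • vp) (v t - vp) t := fun t =>
      ((hx t).sub ((hasDerivAt_id t).smul_const vp)).congr_deriv (by simp)
    have h0 : Tendsto (fun t => v t - vp) atTop (𝓝 0) := by
      simpa using hlim.sub_const vp
    have := (tendsto_inv_smul_of_deriv_tendsto_zero hd h0).add_const vp
    rw [zero_add] at this
    refine this.congr' ?_
    filter_upwards [eventually_gt_atTop 0] with t ht
    rw [smul_sub, smul_smul, inv_mul_cancel₀ ht.ne', one_smul, sub_add_cancel]

end

/-- Along a global solution of the repulsive Kepler ODE with conserved energy `H`,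
the asymptotic velocities `v₊∞ = lim_{t→+∞} v(t)` and `v₋∞ = lim_{t→−∞} v(t)` exist,
satisfy `|v₊∞|² = |v₋∞|² = H > 0`, and `x(t)/t → v₊∞` as `t → +∞`,
`x(t)/t → v₋∞` as `t → −∞`. -/
theorem kepler_asymptotic_velocities (q : ℝ) (hq : 0 < q)
    (x v : ℝ → R3) (H : ℝ)
    (hx0 : ∀ t, x t ≠ 0)
    (hx : ∀ t, HasDerivAt x (v t) t)
    (hv : ∀ t, HasDerivAt v ((q / 2 / ‖x t‖ ^ 3) • x t) t)
    (hH : ∀ t, keplerH q (x t) (v t) = H) :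
    ∃ vp vm : R3,
      Filter.Tendsto v Filter.atTop (nhds vp) ∧
      Filter.Tendsto v Filter.atBot (nhds vm) ∧
      ‖vp‖ ^ 2 = H ∧ ‖vm‖ ^ 2 = H ∧ 0 < H ∧
      Filter.Tendsto (fun t : ℝ => t⁻¹ • x t) Filter.atTop (nhds vp) ∧
      Filter.Tendsto (fun t : ℝ => t⁻¹ • x t) Filter.atBot (nhds vm) := by
  obtain ⟨vp, hp1, hp2, hp3⟩ := kepler_forward q hq x v H hx0 hx hv hH
  -- The time-reversed trajectory `t ↦ (x (-t), -v (-t))` solves the same system.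
  obtain ⟨w, hw1, hw2, hw3⟩ := kepler_forward q hq (fun t => x (-t)) (fun t => -v (-t)) H
    (fun t => hx0 (-t))
    (fun t => ((hx (-t)).scomp t (hasDerivAt_neg t)).congr_deriv (by simp))
    (fun t => ((hv (-t)).scomp t (hasDerivAt_neg t)).neg.congr_deriv (by simp))
    (fun t => by simpa [keplerH] using hH (-t))
  refine ⟨vp, -w, hp1, ?_, hp2, by rwa [norm_neg],
    kepler_energy_pos q hq x v H hx0 hH, hp3, ?_⟩
  · simpa [Function.comp_def] using (hw1.comp Filter.tendsto_neg_atBot_atTop).neg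
  · simpa [Function.comp_def, inv_neg] using (hw3.comp Filter.tendsto_neg_atBot_atTop).neg
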